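/- (Key inequality) Let f be a nonzero smooth compactly supported function on ℝⁿ, p > 1. With C_f*, C_f, K_f, L_f as defined, and Z_p(f) = (∫_{S^{n-1}} ‖∇_ξ f‖_p^{-n} dξ)^{-1/n}, one has vol(K_f)^{-p/n} · ∫_{ℝⁿ} C_f*(∇f(x)) dx ≤ a₂ Z_p(f)^p, where a₂ = ℓ_q n^{(n+p)/n} / (a₁ (n+p)), assuming the L_p Busemann-Petty centroid inequality vol(Γ_p K) ≥ vol(K). -/

import Mathlib

open MeasureTheory Real
open scoped RealInnerProductSpace Pointwise

noncomputable section

/-- `ω_s = π^(s/2) / Γ(s/2 + 1)`. -/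
def omegaR (s : ℝ) : ℝ := Real.pi ^ (s / 2) / Real.Gamma (s / 2 + 1)

/-- `a₁ = ω_{n+p} / (ω₂ ω_n ω_{p-1})`. -/
def aOne (n : ℕ) (p : ℝ) : ℝ := omegaR (n + p) / (omegaR 2 * omegaR n * omegaR (p - 1))

/-- The `L^p` norm of the directional derivative `∇_ξ f = ⟨∇f, ξ⟩`. -/
def dirDerivLpNorm (n : ℕ) (p : ℝ) (f : EuclideanSpace ℝ (Fin n) → ℝ)
    (ξ : EuclideanSpace ℝ (Fin n)) : ℝ :=
  (∫ y, |⟪gradient f y, ξ⟫| ^ p) ^ (1 / p)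

/-- `C_f*(x) = ∫_{S^{n-1}} ‖∇_ξ f‖_p^{-(n+p)} |⟨x, ξ⟩|^p dξ`. -/
def Cfstar (n : ℕ) (p : ℝ) (f : EuclideanSpace ℝ (Fin n) → ℝ)
    (x : EuclideanSpace ℝ (Fin n)) : ℝ :=
  ∫ ξ : Metric.sphere (0 : EuclideanSpace ℝ (Fin n)) 1,
    dirDerivLpNorm n p f ξ ^ (-(n + p : ℝ)) * |⟪x, (ξ : EuclideanSpace ℝ (Fin n))⟫| ^ p
      ∂(volume : Measure (EuclideanSpace ℝ (Fin n))).toSphere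

/-- The Legendre transform. -/
def legendre {n : ℕ} (C : EuclideanSpace ℝ (Fin n) → ℝ) (x : EuclideanSpace ℝ (Fin n)) : ℝ :=
  ⨆ y : EuclideanSpace ℝ (Fin n), (⟪x, y⟫ - C y)

/-- The `L_p`-centroid body `Γ_p L`, described through its support function
`h_{Γ_p L}(v) = ((1/(a₁ vol(L))) ∫_L |⟨v, x⟩|^p dx)^{1/p}`. -/
def centroidBody (n : ℕ) (p : ℝ) (L : Set (EuclideanSpace ℝ (Fin n))) :
    Set (EuclideanSpace ℝ (Fin n)) :=
  {x | ∀ v : EuclideanSpace ℝ (Fin n),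
    ⟪x, v⟫ ≤ ((aOne n p * (volume L).toReal)⁻¹ * ∫ y in L, |⟪v, y⟫| ^ p) ^ (1 / p)}


/-- `Z_p(f) = (∫_{S^{n-1}} ‖∇_ξ f‖_p^{-n} dξ)^{-1/n}`. -/
def Zp (n : ℕ) (p : ℝ) (f : EuclideanSpace ℝ (Fin n) → ℝ) : ℝ :=
  (∫ ξ : Metric.sphere (0 : EuclideanSpace ℝ (Fin n)) 1,
      dirDerivLpNorm n p f ξ ^ (-(n : ℝ))
        ∂(volume : Measure (EuclideanSpace ℝ (Fin n))).toSphere) ^ (-(1 / (n : ℝ)))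

section Polar

variable {E : Type*} [NormedAddCommGroup E] [NormedSpace ℝ E] [MeasurableSpace E] [BorelSpace E]
  [FiniteDimensional ℝ E] [Nontrivial E] (μ : Measure E) [μ.IsAddHaarMeasure]

/-- Integration in polar coordinates. -/
lemma integral_eq_integral_toSphere_integral_Ioi {g : E → ℝ} (hg : Integrable g μ) :
    ∫ x, g x ∂μ = ∫ ξ : Metric.sphere (0 : E) 1, (∫ r in Set.Ioi (0 : ℝ),
      r ^ (Module.finrank ℝ E - 1) * g (r • (ξ : E))) ∂μ.toSphere := by
  have hmp := μ.measurePreserving_homeomorphUnitSphereProd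
  have hemb := (homeomorphUnitSphereProd E).measurableEmbedding
  set G : Metric.sphere (0 : E) 1 × Set.Ioi (0 : ℝ) → ℝ := fun z => g ((z.2 : ℝ) • (z.1 : E))
    with hG
  have hcomp : ∀ x : ({0}ᶜ : Set E), G (homeomorphUnitSphereProd E x) = g x := by
    intro x
    have h := congrArg Subtype.val ((homeomorphUnitSphereProd E).symm_apply_apply x)
    rw [homeomorphUnitSphereProd_symm_apply_coe] at h
    simp only [hG, h]
  have hint : Integrable G (μ.toSphere.prod (.volumeIoiPow (Module.finrank ℝ E - 1))) := by
    rw [← hmp.integrable_comp_emb hemb]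
    have h : Integrable (fun x : ({0}ᶜ : Set E) => g x) (μ.comap (↑)) :=
      (integrableOn_iff_comap_subtypeVal (measurableSet_singleton _).compl).1 hg.integrableOn
    exact h.congr (.of_forall fun x => (hcomp x).symm)
  calc
    ∫ x, g x ∂μ = ∫ x : ({0}ᶜ : Set E), g x ∂(μ.comap (↑)) := by
      rw [integral_subtype_comap (measurableSet_singleton _).compl g, restrict_compl_singleton]
    _ = ∫ z, G z ∂(μ.toSphere.prod (.volumeIoiPow (Module.finrank ℝ E - 1))) := by
      rw [← hmp.integral_comp hemb]
      simp only [hcomp]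
    _ = ∫ ξ, (∫ r, G (ξ, r) ∂(.volumeIoiPow (Module.finrank ℝ E - 1))) ∂μ.toSphere :=
      integral_prod _ hint
    _ = _ := by
      refine integral_congr_ae (.of_forall fun ξ => ?_)
      simp only [Measure.volumeIoiPow, ENNReal.ofReal, hG]
      rw [integral_withDensity_eq_integral_smul,
        integral_subtype_comap measurableSet_Ioi
          fun a ↦ Real.toNNReal (a ^ (Module.finrank ℝ E - 1)) • g (a • (ξ : E)),
        setIntegral_congr_fun measurableSet_Ioi fun x hx ↦ ?_]
      · rw [NNReal.smul_def, Real.coe_toNNReal _ (pow_nonneg (le_of_lt hx) _), smul_eq_mul]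
      · exact (measurable_subtype_coe.pow_const _).real_toNNReal

/-- The integral of an `s`-homogeneous function over the unit ball of a gauge `N`. -/
lemma setIntegral_sublevel_of_homogeneous {N F : E → ℝ} {s : ℝ} (hs : 0 ≤ s)
    (hNpos : ∀ ξ, ξ ≠ 0 → 0 < N ξ) (hN : ∀ r : ℝ, 0 < r → ∀ ξ, N (r • ξ) = r * N ξ)
    (hcomp : IsCompact {y | N y ≤ 1}) (hFc : Continuous F)
    (hF : ∀ r : ℝ, 0 < r → ∀ ξ, F (r • ξ) = r ^ s * F ξ) :
    ∫ y in {y | N y ≤ 1}, F y ∂μ = ((Module.finrank ℝ E : ℝ) + s)⁻¹ *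
      ∫ ξ : Metric.sphere (0 : E) 1,
        N ξ ^ (-((Module.finrank ℝ E : ℝ) + s)) * F ξ ∂μ.toSphere := by
  have hd : 0 < Module.finrank ℝ E := Module.finrank_pos
  have hd' : (0 : ℝ) < Module.finrank ℝ E := by exact_mod_cast hd
  have hms := hcomp.isClosed.measurableSet
  rw [← integral_indicator hms, integral_eq_integral_toSphere_integral_Ioi,
    ← integral_const_mul]
  · refine integral_congr_ae (.of_forall fun ξ => ?_)
    have hξ : (ξ : E) ≠ 0 := ne_zero_of_mem_unit_sphere ξ
    have hNξ := hNpos _ hξ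
    have hinv : 0 < (N ξ)⁻¹ := inv_pos.2 hNξ
    calc
      _ = ∫ r in Set.Ioi (0 : ℝ), (Set.Ioc 0 (N ξ)⁻¹).indicator
            (fun r => r ^ ((Module.finrank ℝ E : ℝ) + s - 1) * F ξ) r := by
          refine setIntegral_congr_fun measurableSet_Ioi fun r (hr : 0 < r) => ?_
          have hiff : r • (ξ : E) ∈ {y | N y ≤ 1} ↔ r ∈ Set.Ioc 0 (N ξ)⁻¹ := by
            rw [Set.mem_ofPred_eq, hN r hr, Set.mem_Ioc, ← one_div, le_div_iff₀ hNξ]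
            simp [hr]
          by_cases h : r ∈ Set.Ioc 0 (N ξ)⁻¹
          · rw [Set.indicator_of_mem h, Set.indicator_of_mem (hiff.2 h), hF r hr, ← mul_assoc,
              ← Real.rpow_natCast, ← Real.rpow_add hr, Nat.cast_pred hd]
            ring_nf
          · rw [Set.indicator_of_notMem h, Set.indicator_of_notMem (mt hiff.1 h), mul_zero]
      _ = ∫ r in Set.Ioc 0 (N ξ)⁻¹, r ^ ((Module.finrank ℝ E : ℝ) + s - 1) * F ξ := by
          rw [setIntegral_indicator measurableSet_Ioc,
            Set.inter_eq_right.2 Set.Ioc_subset_Ioi_self]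
      _ = ((Module.finrank ℝ E : ℝ) + s)⁻¹ *
            (N ξ ^ (-((Module.finrank ℝ E : ℝ) + s)) * F ξ) := by
          rw [integral_mul_const, ← intervalIntegral.integral_of_le hinv.le,
            integral_rpow (Or.inl (by linarith)), Real.inv_rpow hNξ.le, Real.rpow_neg hNξ.le,
            sub_add_cancel, Real.zero_rpow (by positivity)]
          ring
  · exact (integrable_indicator_iff hms).2 (hFc.continuousOn.integrableOn_compact hcomp)

end Polar

lemma aOne_pos (n : ℕ) {p : ℝ} (hp : 1 < p) : 0 < aOne n p := by
  have h : ∀ s : ℝ, 0 ≤ s → 0 < omegaR s := fun s hs =>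
    div_pos (Real.rpow_pos_of_pos Real.pi_pos _) (Real.Gamma_pos_of_pos (by linarith))
  exact div_pos (h _ (by positivity)) (mul_pos (mul_pos (h _ (by norm_num)) (h _ (by positivity)))
    (h _ (by linarith)))

/-- Young's inequality with the constant for which the Legendre transform of `c t ^ p` equals 1. -/
lemma young_mul_le_one_add {p q c t : ℝ} (hpq : p.HolderConjugate q) (hc : 0 < c) (ht : 0 ≤ t) :
    (q ^ (1 / q) * (c * p) ^ (1 / p)) * t ≤ 1 + c * t ^ p := by
  have hp := hpq.pos
  have hq := hpq.symm.pos
  have h := Real.young_inequality_of_nonneg (a := (c * p) ^ (1 / p) * t) (b := q ^ (1 / q))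
    (by positivity) (by positivity) hpq
  rw [Real.mul_rpow (by positivity) ht, ← Real.rpow_mul (by positivity),
    ← Real.rpow_mul hq.le, one_div_mul_cancel hp.ne', one_div_mul_cancel hq.ne', Real.rpow_one,
    Real.rpow_one, div_self hq.ne'] at h
  calc _ = (c * p) ^ (1 / p) * t * q ^ (1 / q) := by ring
    _ ≤ _ := h
    _ = _ := by field_simp; ring

section DirectionalDerivative

variable {n : ℕ} {p : ℝ} {f : EuclideanSpace ℝ (Fin n) → ℝ}

lemma continuous_gradient_of_contDiff (hf : ContDiff ℝ (⊤ : ℕ∞) f) : Continuous (gradient f) :=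
  (InnerProductSpace.toDual ℝ _).symm.continuous.comp (hf.continuous_fderiv (by simp))

lemma hasCompactSupport_gradient (hsupp : HasCompactSupport f) :
    HasCompactSupport (gradient f) :=
  (hsupp.fderiv ℝ).comp_left (map_zero (InnerProductSpace.toDual ℝ _).symm)

lemma integrable_abs_inner_gradient_rpow (hp : 0 < p) (hf : ContDiff ℝ (⊤ : ℕ∞) f)
    (hsupp : HasCompactSupport f) (ξ : EuclideanSpace ℝ (Fin n)) :
    Integrable fun y => |⟪gradient f y, ξ⟫| ^ p := by
  have hc := continuous_gradient_of_contDiff hf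
  refine Continuous.integrable_of_hasCompactSupport
    ((hc.inner continuous_const).abs.rpow_const fun _ => Or.inr hp.le) ?_
  exact (hasCompactSupport_gradient hsupp).comp_left
    (g := fun v => |⟪v, ξ⟫| ^ p) (by simp [Real.zero_rpow hp.ne'])

lemma continuous_dirDerivLpNorm (hp : 0 < p) (hf : ContDiff ℝ (⊤ : ℕ∞) f)
    (hsupp : HasCompactSupport f) : Continuous (dirDerivLpNorm n p f) := by
  have hc := continuous_gradient_of_contDiff hf
  refine Continuous.rpow_const ?_ fun _ => Or.inr (by positivity)
  rw [← continuousOn_univ]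
  refine continuousOn_integral_of_compact_support
    (f := fun ξ y => |⟪gradient f y, ξ⟫| ^ p) (hasCompactSupport_gradient hsupp) ?_ ?_
  · refine Continuous.continuousOn ?_
    exact ((hc.comp continuous_snd).inner continuous_fst).abs.rpow_const fun _ => Or.inr hp.le
  · intro ξ y _ hy
    simp [image_eq_zero_of_notMem_tsupport hy, Real.zero_rpow hp.ne']

lemma dirDerivLpNorm_rpow (hp : 0 < p) (ξ : EuclideanSpace ℝ (Fin n)) :
    dirDerivLpNorm n p f ξ ^ p = ∫ y, |⟪gradient f y, ξ⟫| ^ p := by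
  rw [dirDerivLpNorm, ← Real.rpow_mul (integral_nonneg fun _ => by positivity),
    one_div_mul_cancel hp.ne', Real.rpow_one]

lemma dirDerivLpNorm_nonneg (ξ : EuclideanSpace ℝ (Fin n)) : 0 ≤ dirDerivLpNorm n p f ξ :=
  Real.rpow_nonneg (integral_nonneg fun _ => by positivity) _

lemma dirDerivLpNorm_smul (hp : 0 < p) {r : ℝ} (hr : 0 < r) (ξ : EuclideanSpace ℝ (Fin n)) :
    dirDerivLpNorm n p f (r • ξ) = r * dirDerivLpNorm n p f ξ := by
  simp only [dirDerivLpNorm, inner_smul_right, abs_mul, abs_of_pos hr]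
  simp only [Real.mul_rpow hr.le (abs_nonneg _)]
  rw [integral_const_mul, Real.mul_rpow (by positivity) (integral_nonneg fun _ => by positivity),
    ← Real.rpow_mul hr.le, mul_one_div_cancel hp.ne', Real.rpow_one]

/-- A function with compact support whose derivative in a nonzero direction vanishes is zero. -/
lemma eq_zero_of_inner_gradient_eq_zero (hf : ContDiff ℝ (⊤ : ℕ∞) f) (hsupp : HasCompactSupport f)
    {ξ : EuclideanSpace ℝ (Fin n)} (hξ : ξ ≠ 0) (h : ∀ y, ⟪gradient f y, ξ⟫ = 0) : f = 0 := by
  funext x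
  have hdf : Differentiable ℝ f := hf.differentiable (by simp)
  have hderiv : ∀ t : ℝ, HasDerivAt (fun t : ℝ => f (x + t • ξ)) 0 t := by
    intro t
    have h1 : HasDerivAt (fun t : ℝ => x + t • ξ) ξ t := by
      simpa using ((hasDerivAt_id t).smul_const ξ).const_add x
    have h2 := (hdf (x + t • ξ)).hasFDerivAt.comp_hasDerivAt t h1
    rwa [← inner_gradient_left, h] at h2
  have hconst : ∀ t : ℝ, f (x + t • ξ) = f x := fun t => by
    simpa using is_const_of_deriv_eq_zero (fun t => (hderiv t).differentiableAt)
      (fun t => (hderiv t).deriv) t 0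
  obtain ⟨R, hR⟩ := hsupp.isCompact.isBounded.exists_norm_le
  have hξ' : 0 < ‖ξ‖ := norm_pos_iff.2 hξ
  set t : ℝ := (|R| + 1 + ‖x‖) / ‖ξ‖ with ht
  have ht0 : 0 ≤ t := by positivity
  have hnorm : ‖t • ξ‖ = |R| + 1 + ‖x‖ := by
    rw [norm_smul, Real.norm_of_nonneg ht0, ht, div_mul_cancel₀ _ hξ'.ne']
  rw [Pi.zero_apply, ← hconst t]
  refine image_eq_zero_of_notMem_tsupport fun hmem => ?_
  have h1 := hR _ hmem
  have h2 : ‖t • ξ‖ ≤ ‖x + t • ξ‖ + ‖x‖ := by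
    simpa using norm_sub_le (x + t • ξ) x
  linarith [le_abs_self R]

lemma dirDerivLpNorm_pos (hp : 0 < p) (hf : ContDiff ℝ (⊤ : ℕ∞) f) (hsupp : HasCompactSupport f)
    (hne : f ≠ 0) {ξ : EuclideanSpace ℝ (Fin n)} (hξ : ξ ≠ 0) : 0 < dirDerivLpNorm n p f ξ := by
  have hc := continuous_gradient_of_contDiff hf
  refine Real.rpow_pos_of_pos ?_ _
  refine (integral_nonneg fun _ => by positivity).lt_of_ne' fun h0 => hne ?_
  refine eq_zero_of_inner_gradient_eq_zero hf hsupp hξ fun y => ?_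
  rw [integral_eq_zero_iff_of_nonneg (fun _ => by positivity)
    (integrable_abs_inner_gradient_rpow hp hf hsupp ξ)] at h0
  have hcont : Continuous fun y => |⟪gradient f y, ξ⟫| ^ p :=
    (hc.inner continuous_const).abs.rpow_const fun _ => Or.inr hp.le
  have hy := congrFun ((hcont.ae_eq_iff_eq volume continuous_zero).1 h0) y
  simpa using (Real.rpow_eq_zero (abs_nonneg _) hp.ne').1 hy

lemma convex_dirDerivLpNorm_le_one (hp : 1 < p) (hf : ContDiff ℝ (⊤ : ℕ∞) f)
    (hsupp : HasCompactSupport f) :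
    Convex ℝ {ξ : EuclideanSpace ℝ (Fin n) | dirDerivLpNorm n p f ξ ≤ 1} := by
  have hp0 : 0 < p := by linarith
  have hset : {ξ : EuclideanSpace ℝ (Fin n) | dirDerivLpNorm n p f ξ ≤ 1} =
      {ξ | ξ ∈ Set.univ ∧ ∫ y, |⟪gradient f y, ξ⟫| ^ p ≤ 1} := by
    ext ξ
    simp only [Set.mem_ofPred_eq, Set.mem_univ, true_and]
    rw [← dirDerivLpNorm_rpow hp0, ← Real.rpow_le_rpow_iff (dirDerivLpNorm_nonneg ξ) zero_le_one hp0,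
      Real.one_rpow]
  rw [hset]
  refine ConvexOn.convex_le ⟨convex_univ, fun ξ _ η _ a b ha hb hab => ?_⟩ 1
  have hi := integrable_abs_inner_gradient_rpow hp0 hf hsupp
  rw [smul_eq_mul, smul_eq_mul, ← integral_const_mul, ← integral_const_mul,
    ← integral_add ((hi ξ).const_mul a) ((hi η).const_mul b)]
  refine integral_mono (hi _) (((hi ξ).const_mul a).add ((hi η).const_mul b)) fun y => ?_
  simp only [inner_add_right, inner_smul_right]
  have h := (convexOn_rpow hp.le).2 (abs_nonneg ⟪gradient f y, ξ⟫) (abs_nonneg ⟪gradient f y, η⟫)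
    ha hb hab
  simp only [smul_eq_mul] at h
  refine le_trans (Real.rpow_le_rpow (abs_nonneg _) ?_ hp0.le) h
  refine (abs_add_le _ _).trans_eq ?_
  rw [abs_mul, abs_mul, abs_of_nonneg ha, abs_of_nonneg hb]

lemma isCompact_dirDerivLpNorm_le_one (hp : 0 < p) (hf : ContDiff ℝ (⊤ : ℕ∞) f)
    (hsupp : HasCompactSupport f) (hne : f ≠ 0) :
    IsCompact {ξ : EuclideanSpace ℝ (Fin n) | dirDerivLpNorm n p f ξ ≤ 1} := by
  have hc := continuous_dirDerivLpNorm hp hf hsupp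
  obtain ⟨m, hm, hmle⟩ : ∃ m : ℝ, 0 < m ∧ ∀ ξ ∈ Metric.sphere (0 : EuclideanSpace ℝ (Fin n)) 1,
      m ≤ dirDerivLpNorm n p f ξ := by
    rcases (Metric.sphere (0 : EuclideanSpace ℝ (Fin n)) 1).eq_empty_or_nonempty with h | h
    · exact ⟨1, one_pos, by simp [h]⟩
    · obtain ⟨ξ, hξ, hmin⟩ := (isCompact_sphere _ _).exists_isMinOn h hc.continuousOn
      exact ⟨_, dirDerivLpNorm_pos hp hf hsupp hne (ne_zero_of_mem_unit_sphere ⟨ξ, hξ⟩), hmin⟩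
  refine Metric.isCompact_of_isClosed_isBounded (isClosed_le hc continuous_const)
    ((Metric.isBounded_closedBall (x := (0 : EuclideanSpace ℝ (Fin n))) (r := m⁻¹)).subset
      fun ξ hξ => ?_)
  rw [mem_closedBall_zero_iff]
  rcases eq_or_ne ξ 0 with rfl | h0
  · simpa using hm.le
  have hpos : 0 < ‖ξ‖ := norm_pos_iff.2 h0
  have h1 := hmle (‖ξ‖⁻¹ • ξ) (by simp [norm_smul, hpos.ne'])
  rw [dirDerivLpNorm_smul hp (inv_pos.2 hpos)] at h1
  rw [← one_div, le_div_iff₀ hm]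
  calc ‖ξ‖ * m ≤ ‖ξ‖ * (‖ξ‖⁻¹ * dirDerivLpNorm n p f ξ) := by gcongr
    _ = dirDerivLpNorm n p f ξ := by field_simp
    _ ≤ 1 := hξ

lemma zero_mem_interior_dirDerivLpNorm_le_one (hp : 0 < p) (hf : ContDiff ℝ (⊤ : ℕ∞) f)
    (hsupp : HasCompactSupport f) :
    (0 : EuclideanSpace ℝ (Fin n)) ∈ interior {ξ | dirDerivLpNorm n p f ξ ≤ 1} := by
  have hc := continuous_dirDerivLpNorm hp hf hsupp
  refine interior_mono (s := {ξ | dirDerivLpNorm n p f ξ < 1})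
    (fun ξ h => (show dirDerivLpNorm n p f ξ < 1 from h).le) ?_
  rw [(isOpen_lt hc continuous_const).interior_eq]
  simp [dirDerivLpNorm, Real.zero_rpow hp.ne', hp.ne']

/-- By Fubini, `∫ C_f*(∇f) = ∫_{S^{n-1}} ‖∇_ξ f‖_p^{-n} dξ`. -/
lemma integral_Cfstar_gradient (hp : 0 < p) (hf : ContDiff ℝ (⊤ : ℕ∞) f)
    (hsupp : HasCompactSupport f) (hne : f ≠ 0) :
    ∫ x, Cfstar n p f (gradient f x) =
      ∫ ξ : Metric.sphere (0 : EuclideanSpace ℝ (Fin n)) 1, dirDerivLpNorm n p f ξ ^ (-(n : ℝ))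
        ∂(volume : Measure (EuclideanSpace ℝ (Fin n))).toSphere := by
  have hc := continuous_gradient_of_contDiff hf
  have hN := continuous_dirDerivLpNorm hp hf hsupp
  have hpos : ∀ ξ : Metric.sphere (0 : EuclideanSpace ℝ (Fin n)) 1,
      0 < dirDerivLpNorm n p f ξ := fun ξ =>
    dirDerivLpNorm_pos hp hf hsupp hne (ne_zero_of_mem_unit_sphere ξ)
  unfold Cfstar
  rw [integral_integral_swap_of_hasCompactSupport]
  · refine integral_congr_ae (.of_forall fun ξ => ?_)
    simp only
    rw [integral_const_mul, ← dirDerivLpNorm_rpow hp, ← Real.rpow_add (hpos ξ)]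
    ring_nf
  · refine Continuous.mul (Continuous.rpow_const ?_ fun z => Or.inl (hpos z.2).ne')
      (Continuous.rpow_const ?_ fun _ => Or.inr hp.le)
    · exact hN.comp (continuous_subtype_val.comp continuous_snd)
    · exact ((hc.comp continuous_fst).inner (continuous_subtype_val.comp continuous_snd)).abs
  · refine HasCompactSupport.intro
      ((hasCompactSupport_gradient hsupp).isCompact.prod isCompact_univ) fun z hz => ?_
    have hz1 : z.1 ∉ tsupport (gradient f) := fun h => hz ⟨h, Set.mem_univ _⟩
    simp [Function.uncurry, image_eq_zero_of_notMem_tsupport hz1, Real.zero_rpow hp.ne']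

end DirectionalDerivative

/-- Key inequality: assuming the `L_p` Busemann-Petty centroid inequality, for any nonzero
smooth compactly supported `f` one has
`vol(K_f)^{-p/n} ∫ C_f*(∇f) dx ≤ a₂ Z_p(f)^p`, `a₂ = ℓ_q n^{(n+p)/n} / (a₁ (n+p))`. -/
theorem key_inequality (n : ℕ) (hn : 1 ≤ n) (p q : ℝ) (hp : 1 < p)
    (hpq : 1 / p + 1 / q = 1) (f : EuclideanSpace ℝ (Fin n) → ℝ) (hf : ContDiff ℝ (⊤ : ℕ∞) f)
    (hsupp : HasCompactSupport f) (hne : f ≠ 0)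
    (hBP : ∀ K : Set (EuclideanSpace ℝ (Fin n)), IsCompact K → Convex ℝ K →
      (0 : EuclideanSpace ℝ (Fin n)) ∈ interior K →
      (volume K).toReal ≤ (volume (centroidBody n p K)).toReal) :
    (volume {x : EuclideanSpace ℝ (Fin n) | legendre (Cfstar n p f) x ≤ 1}).toReal
        ^ (-(p / (n : ℝ))) * (∫ x, Cfstar n p f (gradient f x)) ≤
      (q ^ (-(p / q)) * p⁻¹) * (n : ℝ) ^ (((n : ℝ) + p) / (n : ℝ)) / (aOne n p * ((n : ℝ) + p)) *
        Zp n p f ^ p := by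
  have hp0 : 0 < p := by linarith
  have hn0 : (0 : ℝ) < n := by exact_mod_cast hn
  have hconj : p.HolderConjugate q :=
    Real.holderConjugate_iff.2 ⟨hp, by simpa only [one_div] using hpq⟩
  have hq0 : 0 < q := hconj.symm.pos
  have : Nontrivial (EuclideanSpace ℝ (Fin n)) :=
    Module.nontrivial_of_finrank_pos (R := ℝ) (by simpa using Nat.lt_of_succ_le hn)
  have ha := aOne_pos n hp
  set L : Set (EuclideanSpace ℝ (Fin n)) := {ξ | dirDerivLpNorm n p f ξ ≤ 1} with hL
  have hLc : IsCompact L := isCompact_dirDerivLpNorm_le_one hp0 hf hsupp hne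
  have hLi := zero_mem_interior_dirDerivLpNorm_le_one hp0 hf hsupp
  have hBPL := hBP L hLc (convex_dirDerivLpNorm_le_one hp hf hsupp) hLi
  set V : ℝ := (volume L).toReal with hV
  have hV0 : 0 < V := ENNReal.toReal_pos
    (Measure.measure_pos_of_nonempty_interior volume ⟨0, hLi⟩).ne' hLc.measure_ne_top
  have hsphere : ∫ ξ : Metric.sphere (0 : EuclideanSpace ℝ (Fin n)) 1,
      dirDerivLpNorm n p f ξ ^ (-(n : ℝ))
        ∂(volume : Measure (EuclideanSpace ℝ (Fin n))).toSphere = n * V := by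
    have h := setIntegral_sublevel_of_homogeneous volume (F := fun _ => 1) le_rfl
      (fun ξ hξ => dirDerivLpNorm_pos hp0 hf hsupp hne hξ)
      (fun r hr ξ => dirDerivLpNorm_smul hp0 hr ξ) hLc continuous_const (by simp)
    simp only [finrank_euclideanSpace, Fintype.card_fin, add_zero, mul_one, integral_const,
      smul_eq_mul, measureReal_def, Measure.restrict_apply_univ] at h
    rw [← hL, ← hV, eq_inv_mul_iff_mul_eq₀ hn0.ne'] at h
    exact h.symm
  have hCf : ∀ v, Cfstar n p f v = (n + p) * ∫ y in L, |⟪v, y⟫| ^ p := by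
    intro v
    have h := setIntegral_sublevel_of_homogeneous volume (F := fun y => |⟪v, y⟫| ^ p) hp0.le
      (fun ξ hξ => dirDerivLpNorm_pos hp0 hf hsupp hne hξ)
      (fun r hr ξ => dirDerivLpNorm_smul hp0 hr ξ) hLc
      ((continuous_const.inner continuous_id).abs.rpow_const fun _ => Or.inr hp0.le)
      (fun r hr ξ => by
        rw [inner_smul_right, abs_mul, abs_of_pos hr, Real.mul_rpow hr.le (abs_nonneg _)])
    simp only [finrank_euclideanSpace, Fintype.card_fin] at h
    rw [← hL, eq_inv_mul_iff_mul_eq₀ (by positivity)] at h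
    exact h.symm
  set c : ℝ := (n + p) * (aOne n p * V) with hc
  have hc0 : 0 < c := by positivity
  set lam : ℝ := q ^ (1 / q) * (c * p) ^ (1 / p) with hlam
  have hlam0 : 0 < lam := by positivity
  have hsub : lam • centroidBody n p L ⊆ {x | legendre (Cfstar n p f) x ≤ 1} := by
    rintro _ ⟨x, hx, rfl⟩
    change ⨆ v, _ ≤ (1 : ℝ)
    refine ciSup_le fun v => ?_
    have hI : 0 ≤ ∫ y in L, |⟪v, y⟫| ^ p := integral_nonneg fun _ => by positivity
    have hh := hx v
    rw [← hV] at hh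
    set t := ((aOne n p * V)⁻¹ * ∫ y in L, |⟪v, y⟫| ^ p) ^ (1 / p) with ht
    have htp : c * t ^ p = Cfstar n p f v := by
      rw [ht, ← Real.rpow_mul (by positivity), one_div_mul_cancel hp0.ne', Real.rpow_one, hCf, hc]
      field_simp
    have hyoung := young_mul_le_one_add (t := t) hconj hc0 (by positivity)
    rw [htp] at hyoung
    have h2 : lam * ⟪x, v⟫ ≤ lam * t := by gcongr
    simp only [real_inner_smul_left]
    linarith
  rw [integral_Cfstar_gradient hp0 hf hsupp hne, Zp, hsphere]
  have hpn : 0 < p / n := by positivity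
  by_cases htop : volume {x | legendre (Cfstar n p f) x ≤ 1} = ⊤
  · rw [htop, ENNReal.toReal_top, Real.zero_rpow (by linarith), zero_mul]
    positivity
  have hvol : lam ^ n * V ≤ (volume {x | legendre (Cfstar n p f) x ≤ 1}).toReal := by
    have h := ENNReal.toReal_mono htop (measure_mono hsub)
    rw [Measure.addHaar_smul, ENNReal.toReal_mul, finrank_euclideanSpace, Fintype.card_fin,
      abs_of_pos (by positivity), ENNReal.toReal_ofReal (by positivity)] at h
    exact le_trans (by gcongr) h
  have hlamp : (lam ^ n) ^ (-(p / n)) = q ^ (-(p / q)) * (c * p)⁻¹ := by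
    rw [← Real.rpow_natCast, ← Real.rpow_mul hlam0.le,
      show (n : ℝ) * -(p / n) = -p by field_simp, hlam,
      Real.mul_rpow (by positivity) (by positivity), ← Real.rpow_mul hq0.le,
      ← Real.rpow_mul (by positivity), ← Real.rpow_neg_one (c * p)]
    congr 2 <;> field_simp
  calc
    _ ≤ (lam ^ n * V) ^ (-(p / (n : ℝ))) * (n * V) := by
      gcongr ?_ * _
      exact Real.rpow_le_rpow_of_nonpos (by positivity) hvol (neg_nonpos.2 hpn.le)
    _ = q ^ (-(p / q)) * (c * p)⁻¹ * V ^ (-(p / (n : ℝ))) * (n * V) := by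
      rw [Real.mul_rpow (by positivity) hV0.le, hlamp]
    _ = _ := by
      rw [← Real.rpow_mul (by positivity), show -(1 / (n : ℝ)) * p = -(p / n) by ring,
        Real.mul_rpow hn0.le hV0.le, add_div, div_self hn0.ne', Real.rpow_add hn0, Real.rpow_one,
        Real.rpow_neg hn0.le, hc]
      field_simp
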